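/- arXiv:1405.0120 — 2 statements merged into one kernel-verified Lean document; each statement's English description precedes it below -/
import Mathlib

section
/- Let n ≥ 3, f ∈ C³(ℝⁿ), g ∈ C²(ℝⁿ), F ∈ C²(ℝⁿ × [0,∞)). If u(x,t) = ε V(x,t) + N(F)(x,t) with V and N as in the Agemi–Takamura formula, then u solves ∂ₜ²u − Δu = F − H in ℝⁿ × [0,∞), where H(x,t) = ((n−3)/((n−2)ωₙ)) [ ∫₀ᵗ dτ ∫_{|ω|=1} (∂ₜF)(x+(t−τ)ω,τ) dS_ω + ∫_{|ω|=1} F(x+tω,0) dS_ω + ε ∫_{|ω|=1} (Δf + (n−2) ω·∇g)(x+tω) dS_ω ]. -/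
open MeasureTheory Metric

/-- The surface measure of the unit sphere in `ℝⁿ`. -/
noncomputable def sphereMeasure (n : ℕ) :
    Measure (sphere (0 : EuclideanSpace ℝ (Fin n)) 1) :=
  Measure.toSphere (volume : Measure (EuclideanSpace ℝ (Fin n)))

/-- Total mass `ωₙ` of the unit sphere in `ℝⁿ`. -/
noncomputable def sphereArea (n : ℕ) : ℝ := ((sphereMeasure n) Set.univ).toReal

/-- The Laplacian on `ℝⁿ` as a sum of second partial derivatives. -/
noncomputable def laplacian (n : ℕ) (f : EuclideanSpace ℝ (Fin n) → ℝ)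
    (x : EuclideanSpace ℝ (Fin n)) : ℝ :=
  ∑ i : Fin n,
    fderiv ℝ (fun y => fderiv ℝ f y (EuclideanSpace.single i 1)) x
      (EuclideanSpace.single i 1)

/-- The linear part `V` of the Agemi–Takamura integral equation. -/
noncomputable def linearPart (n : ℕ) (f g : EuclideanSpace ℝ (Fin n) → ℝ)
    (x : EuclideanSpace ℝ (Fin n)) (t : ℝ) : ℝ :=
  (sphereArea n)⁻¹ *
    ∫ ω : sphere (0 : EuclideanSpace ℝ (Fin n)) 1,
      (t * fderiv ℝ f (x + t • (ω : EuclideanSpace ℝ (Fin n)))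
          (ω : EuclideanSpace ℝ (Fin n)) / ((n : ℝ) - 2)
        + f (x + t • (ω : EuclideanSpace ℝ (Fin n)))
        + t * g (x + t • (ω : EuclideanSpace ℝ (Fin n))))
      ∂(sphereMeasure n)

/-- The Duhamel-type integral operator `N`. -/
noncomputable def duhamelOp (n : ℕ) (F : EuclideanSpace ℝ (Fin n) → ℝ → ℝ)
    (x : EuclideanSpace ℝ (Fin n)) (t : ℝ) : ℝ :=
  ((((n : ℝ) - 2) * sphereArea n)⁻¹) *
    ∫ τ in (0 : ℝ)..t, (t - τ) *
      ∫ ω : sphere (0 : EuclideanSpace ℝ (Fin n)) 1,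
        F (x + (t - τ) • (ω : EuclideanSpace ℝ (Fin n))) τ
        ∂(sphereMeasure n)

/-- The correction term `H` in Theorem 1. -/
noncomputable def correctionH (n : ℕ) (ε : ℝ)
    (f g : EuclideanSpace ℝ (Fin n) → ℝ)
    (F : EuclideanSpace ℝ (Fin n) → ℝ → ℝ)
    (x : EuclideanSpace ℝ (Fin n)) (t : ℝ) : ℝ :=
  (((n : ℝ) - 3) / (((n : ℝ) - 2) * sphereArea n)) *
    ((∫ τ in (0 : ℝ)..t,
        ∫ ω : sphere (0 : EuclideanSpace ℝ (Fin n)) 1,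
          deriv (fun s => F (x + (t - τ) • (ω : EuclideanSpace ℝ (Fin n))) s) τ
          ∂(sphereMeasure n))
      + (∫ ω : sphere (0 : EuclideanSpace ℝ (Fin n)) 1,
          F (x + t • (ω : EuclideanSpace ℝ (Fin n))) 0 ∂(sphereMeasure n))
      + ε * ∫ ω : sphere (0 : EuclideanSpace ℝ (Fin n)) 1,
          (laplacian n f (x + t • (ω : EuclideanSpace ℝ (Fin n)))
            + ((n : ℝ) - 2) *
              fderiv ℝ g (x + t • (ω : EuclideanSpace ℝ (Fin n)))
                (ω : EuclideanSpace ℝ (Fin n)))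
          ∂(sphereMeasure n))


set_option linter.unusedSectionVars false
section param

variable {α A P W : Type} [MeasurableSpace α] {μ : Measure α} [IsFiniteMeasure μ]
  [NormedAddCommGroup A] [NormedSpace ℝ A] [FiniteDimensional ℝ A] [MeasurableSpace A] [BorelSpace A]
  [NormedAddCommGroup P] [NormedSpace ℝ P] [FiniteDimensional ℝ P]
  [NormedAddCommGroup W] [NormedSpace ℝ W]
  {c : α → A} {K : Set A}

lemma par_meas (hc : Measurable c) {Ψ : A → W} (hΨ : Continuous Ψ) :
    AEStronglyMeasurable (fun a => Ψ (c a)) μ := by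
  have : ProperSpace A := FiniteDimensional.proper ℝ A
  exact (hΨ.stronglyMeasurable.comp_measurable hc).aestronglyMeasurable

lemma par_integrable (hc : Measurable c) (hK : IsCompact K) (hcK : ∀ᵐ a ∂μ, c a ∈ K)
    {Ψ : A → W} (hΨ : Continuous Ψ) : Integrable (fun a => Ψ (c a)) μ := by
  obtain ⟨C, hC⟩ := hK.exists_bound_of_continuousOn hΨ.continuousOn
  refine Integrable.of_bound (par_meas hc hΨ) C ?_
  filter_upwards [hcK] with a ha using hC _ ha

lemma par_bound (hK : IsCompact K) {Φ : A × P → W} (hΦ : Continuous Φ) (p : P) :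
    ∃ C : ℝ, ∀ a ∈ K, ∀ q ∈ ball p 1, ‖Φ (a, q)‖ ≤ C := by
  have : ProperSpace P := FiniteDimensional.proper ℝ P
  obtain ⟨C, hC⟩ := (hK.prod (isCompact_closedBall p 1)).exists_bound_of_continuousOn
    hΦ.continuousOn
  exact ⟨C, fun a ha q hq => hC (a, q) ⟨ha, ball_subset_closedBall hq⟩⟩

lemma par_continuous (hc : Measurable c) (hK : IsCompact K) (hcK : ∀ᵐ a ∂μ, c a ∈ K)
    {Φ : A × P → W} (hΦ : Continuous Φ) : Continuous (fun p => ∫ a, Φ (c a, p) ∂μ) := by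
  rw [continuous_iff_continuousAt]
  intro p
  obtain ⟨C, hC⟩ := par_bound hK hΦ p
  refine continuousAt_of_dominated (bound := fun _ => C) ?_ ?_ (integrable_const _) ?_
  · exact Filter.Eventually.of_forall fun q =>
      par_meas (Ψ := fun a => Φ (a, q)) hc (by fun_prop)
  · filter_upwards [ball_mem_nhds p one_pos] with q hq
    filter_upwards [hcK] with a ha using hC _ ha _ hq
  · exact Filter.Eventually.of_forall fun a => by fun_prop

lemma par_hasFDerivAt (hc : Measurable c) (hK : IsCompact K) (hcK : ∀ᵐ a ∂μ, c a ∈ K)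
    {Φ : A × P → W} (hΦ : ContDiff ℝ 1 Φ) (p : P) :
    HasFDerivAt (fun p => ∫ a, Φ (c a, p) ∂μ)
      (∫ a, (fderiv ℝ Φ (c a, p)).comp (ContinuousLinearMap.inr ℝ A P) ∂μ) p := by
  have hΦ' : Continuous (fderiv ℝ Φ) := hΦ.continuous_fderiv one_ne_zero
  have hD : Continuous fun z : A × P =>
      (fderiv ℝ Φ z).comp (ContinuousLinearMap.inr ℝ A P) := by fun_prop
  obtain ⟨C, hC⟩ := par_bound hK hD p
  refine hasFDerivAt_integral_of_dominated_of_fderiv_le (bound := fun _ => C)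
    (F := fun p a => Φ (c a, p))
    (F' := fun p a => (fderiv ℝ Φ (c a, p)).comp (ContinuousLinearMap.inr ℝ A P))
    (ball_mem_nhds p one_pos) ?_ ?_ ?_ ?_ (integrable_const _) ?_
  · exact Filter.Eventually.of_forall fun q =>
      par_meas (Ψ := fun a => Φ (a, q)) hc (by have := hΦ.continuous; fun_prop)
  · exact par_integrable (Ψ := fun a => Φ (a, p)) hc hK hcK (by have := hΦ.continuous; fun_prop)
  · exact par_meas (Ψ := fun a => (fderiv ℝ Φ (a, p)).comp (ContinuousLinearMap.inr ℝ A P)) hc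
      (by fun_prop)
  · filter_upwards [hcK] with a ha q hq using hC _ ha _ hq
  · refine Filter.Eventually.of_forall fun a q _ => ?_
    have h1 : HasFDerivAt Φ (fderiv ℝ Φ (c a, q)) (c a, q) :=
      (hΦ.differentiable one_ne_zero _).hasFDerivAt
    exact h1.comp q (hasFDerivAt_prodMk_right (c a) q)

lemma par_contDiff (hc : Measurable c) (hK : IsCompact K) (hcK : ∀ᵐ a ∂μ, c a ∈ K)
    (k : ℕ) : ∀ {W : Type} [NormedAddCommGroup W] [NormedSpace ℝ W]
    {Φ : A × P → W} (_ : ContDiff ℝ k Φ), ContDiff ℝ k (fun p => ∫ a, Φ (c a, p) ∂μ) := by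
  induction k with
  | zero =>
    intro W _ _ Φ hΦ
    have : Continuous Φ := hΦ.continuous
    exact contDiff_zero.2 (par_continuous hc hK hcK this)
  | succ k ih =>
    intro W _ _ Φ hΦ
    push_cast at hΦ ⊢
    rw [contDiff_succ_iff_hasFDerivAt]
    refine ⟨_, ?_, fun p => par_hasFDerivAt hc hK hcK (hΦ.of_le (by simp)) p⟩
    refine ih (Φ := fun z => (fderiv ℝ Φ z).comp (ContinuousLinearMap.inr ℝ A P)) ?_
    have : ContDiff ℝ k (fderiv ℝ Φ) := hΦ.fderiv_right le_rfl
    exact this.clm_comp contDiff_const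

lemma fderiv_slice {Φ : A × P → ℝ} (hΦ : ContDiff ℝ 1 Φ) (a : A) (p v : P) :
    fderiv ℝ (fun q => Φ (a, q)) p v = fderiv ℝ Φ (a, p) (0, v) := by
  have h1 : HasFDerivAt Φ (fderiv ℝ Φ (a, p)) (a, p) :=
      (hΦ.differentiable one_ne_zero _).hasFDerivAt
  have h2 := h1.comp p (hasFDerivAt_prodMk_right a p)
  have h3 := h2.fderiv
  simp only [Function.comp_def] at h3
  rw [h3]; simp

lemma par_fderiv (hc : Measurable c) (hK : IsCompact K) (hcK : ∀ᵐ a ∂μ, c a ∈ K)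
    {Φ : A × P → ℝ} (hΦ : ContDiff ℝ 1 Φ) (p v : P) :
    fderiv ℝ (fun p => ∫ a, Φ (c a, p) ∂μ) p v
      = ∫ a, fderiv ℝ (fun q => Φ (c a, q)) p v ∂μ := by
  have hΦ' : Continuous (fderiv ℝ Φ) := hΦ.continuous_fderiv one_ne_zero
  rw [(par_hasFDerivAt hc hK hcK hΦ p).fderiv, ContinuousLinearMap.integral_apply]
  · refine integral_congr_ae (Filter.Eventually.of_forall fun a => ?_)
    simp [fderiv_slice hΦ]
  · exact par_integrable (Ψ := fun a => (fderiv ℝ Φ (a, p)).comp (ContinuousLinearMap.inr ℝ A P))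
      hc hK hcK (by fun_prop)

lemma par_hasDerivAt (hc : Measurable c) (hK : IsCompact K) (hcK : ∀ᵐ a ∂μ, c a ∈ K)
    {Φ : A × ℝ → ℝ} (hΦ : ContDiff ℝ 1 Φ) (p : ℝ) :
    HasDerivAt (fun p => ∫ a, Φ (c a, p) ∂μ)
      (∫ a, deriv (fun q => Φ (c a, q)) p ∂μ) p := by
  have h := (par_hasFDerivAt hc hK hcK hΦ p).differentiableAt.hasDerivAt
  have h2 := par_fderiv hc hK hcK hΦ p 1
  rw [fderiv_apply_one_eq_deriv] at h2
  simp only [fderiv_apply_one_eq_deriv] at h2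
  rwa [h2] at h

lemma par_laplacian {n : ℕ} (hc : Measurable c) (hK : IsCompact K) (hcK : ∀ᵐ a ∂μ, c a ∈ K)
    {Φ : A × EuclideanSpace ℝ (Fin n) → ℝ} (hΦ : ContDiff ℝ 2 Φ) (x : EuclideanSpace ℝ (Fin n)) :
    laplacian n (fun p => ∫ a, Φ (c a, p) ∂μ) x
      = ∫ a, laplacian n (fun q => Φ (c a, q)) x ∂μ := by
  have h1 : ContDiff ℝ 1 Φ := hΦ.of_le (by norm_num)
  have hv : ∀ v : EuclideanSpace ℝ (Fin n), ContDiff ℝ 1 (fun z => fderiv ℝ Φ z (0, v)) := by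
    intro v
    exact (hΦ.fderiv_right (m := 1) (by norm_num)).clm_apply contDiff_const
  unfold laplacian
  rw [integral_finsetSum]
  · refine Finset.sum_congr rfl fun i _ => ?_
    have e : (fun y => fderiv ℝ (fun p => ∫ a, Φ (c a, p) ∂μ) y (EuclideanSpace.single i 1))
        = fun y => ∫ a, fderiv ℝ Φ (c a, y) (0, EuclideanSpace.single i 1) ∂μ := by
      funext y
      rw [par_fderiv hc hK hcK h1]
      simp only [fderiv_slice h1]
    rw [e, par_fderiv (Φ := fun z => fderiv ℝ Φ z (0, EuclideanSpace.single i 1)) hc hK hcK (hv _)]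
    simp only [fderiv_slice h1]
  · intro i _
    simp only [fderiv_slice h1]
    simp only [fderiv_slice (hv (EuclideanSpace.single i 1))]
    have := (hv (EuclideanSpace.single i 1)).continuous_fderiv one_ne_zero
    exact par_integrable (Ψ := fun a => fderiv ℝ
      (fun z => fderiv ℝ Φ z (0, EuclideanSpace.single i 1)) (a, x) (0, EuclideanSpace.single i 1))
      hc hK hcK (by fun_prop)

end param
section sph
variable {n : ℕ}

local notation "EE" => EuclideanSpace ℝ (Fin n)

instance sphereMeasure_finite : IsFiniteMeasure (sphereMeasure n) := by
  unfold sphereMeasure; infer_instance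

lemma sph_c : Measurable (fun ω : sphere (0 : EE) 1 => (ω : EE)) := measurable_subtype_coe

lemma sph_K : IsCompact (sphere (0 : EE) 1) := isCompact_sphere _ _

lemma sph_cK : ∀ᵐ ω : sphere (0 : EE) 1 ∂(sphereMeasure n), (ω : EE) ∈ sphere (0 : EE) 1 :=
  Filter.Eventually.of_forall fun ω => ω.2

lemma sph_integrable {Ψ : EE → ℝ} (hΨ : Continuous Ψ) :
    Integrable (fun ω : sphere (0 : EE) 1 => Ψ ω) (sphereMeasure n) :=
  par_integrable sph_c sph_K sph_cK hΨ

open scoped Pointwise in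
lemma sph_rot (L : EE ≃ₗᵢ[ℝ] EE) (h : EE → ℝ) :
    ∫ ω : sphere (0 : EE) 1, h (L ω) ∂(sphereMeasure n)
      = ∫ ω : sphere (0 : EE) 1, h ω ∂(sphereMeasure n) := by
  let T : sphere (0 : EE) 1 ≃ₜ sphere (0 : EE) 1 :=
    { toFun := fun ω => ⟨L ω, by simp⟩
      invFun := fun ω => ⟨L.symm ω, by simp⟩
      left_inv := fun ω => by simp
      right_inv := fun ω => by simp
      continuous_toFun := by fun_prop
      continuous_invFun := by fun_prop }
  have hT : MeasurePreserving T (sphereMeasure n) (sphereMeasure n) := by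
    refine ⟨T.measurable, ?_⟩
    ext s hs
    rw [Measure.map_apply T.measurable hs]
    unfold sphereMeasure
    rw [Measure.toSphere_apply' _ (T.measurable hs), Measure.toSphere_apply' _ hs]
    congr 1
    have : Set.Ioo (0 : ℝ) 1 • ((fun ω : sphere (0 : EE) 1 => (ω : EE)) '' (T ⁻¹' s))
        = L ⁻¹' (Set.Ioo (0 : ℝ) 1 • ((fun ω : sphere (0 : EE) 1 => (ω : EE)) '' s)) := by
      ext y
      simp only [Set.mem_smul, Set.mem_preimage, Set.mem_image]
      constructor
      · rintro ⟨r, hr, z, ⟨w, hw, rfl⟩, rfl⟩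
        exact ⟨r, hr, L w, ⟨T w, hw, rfl⟩, by simp⟩
      · rintro ⟨r, hr, z, ⟨w, hw, rfl⟩, hz⟩
        refine ⟨r, hr, _, ⟨T.symm w, by simpa using hw, rfl⟩, ?_⟩
        apply L.injective
        rw [← hz, map_smul]
        congr 1
        exact congrArg Subtype.val (T.apply_symm_apply w)
    rw [this]
    exact L.measurePreserving.measure_preimage_equiv (f := L.toMeasurableEquiv) _
  exact hT.integral_comp T.measurableEmbedding (fun ω : sphere (0 : EE) 1 => h ω)

lemma exp_contDiff_one (A : EE →L[ℝ] EE) :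
    ContDiff ℝ 1 (fun θ : ℝ => NormedSpace.exp (θ • A)) := by
  rw [contDiff_one_iff_deriv]
  have h := fun t : ℝ => hasDerivAt_exp_smul_const (𝕂 := ℝ) A t
  have hc : Continuous (fun θ : ℝ => NormedSpace.exp (θ • A)) :=
    continuous_iff_continuousAt.2 fun t => (h t).continuousAt
  refine ⟨fun t => (h t).differentiableAt, ?_⟩
  rw [funext fun t => (h t).deriv]
  exact hc.mul continuous_const

lemma sph_skew (A : EE →L[ℝ] EE) (hA : A ∈ skewAdjoint (EE →L[ℝ] EE)) {h : EE → ℝ}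
    (hh : ContDiff ℝ 1 h) :
    ∫ ω : sphere (0 : EE) 1, fderiv ℝ h ω (A ω) ∂(sphereMeasure n) = 0 := by
  let _ : NormedAlgebra ℚ (EE →L[ℝ] EE) := NormedAlgebra.restrictScalars ℚ ℝ _
  have exp0 : NormedSpace.exp ((0:ℝ) • A) = 1 := by
    have h0 : (0:ℝ) • A = 0 := by ext; simp
    rw [h0, NormedSpace.exp_zero]
  have hΦ : ContDiff ℝ 1 (fun z : EE × ℝ => h ((NormedSpace.exp (z.2 • A)) z.1)) := by
    apply hh.comp
    exact ((exp_contDiff_one A).comp contDiff_snd).clm_apply contDiff_fst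
  have key := par_hasDerivAt (μ := sphereMeasure n) sph_c sph_K sph_cK hΦ 0
  have hconst : (fun p : ℝ => ∫ ω : sphere (0 : EE) 1,
      h ((NormedSpace.exp (p • A)) ω) ∂(sphereMeasure n))
      = fun _ => ∫ ω : sphere (0 : EE) 1, h ω ∂(sphereMeasure n) := by
    funext p
    have hu : NormedSpace.exp (p • A) ∈ unitary (EE →L[ℝ] EE) :=
      NormedSpace.exp_mem_unitary_of_mem_skewAdjoint (skewAdjoint.smul_mem p hA)
    exact sph_rot (Unitary.linearIsometryEquiv ⟨_, hu⟩) h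
  simp only at key
  rw [hconst] at key
  have := key.unique (hasDerivAt_const _ _)
  rw [← this]
  refine integral_congr_ae (Filter.Eventually.of_forall fun ω => ?_)
  simp only
  have h1 : HasDerivAt (fun θ : ℝ => (NormedSpace.exp (θ • A)) (ω : EE)) (A ω) 0 := by
    have h2 := (hasDerivAt_exp_smul_const (𝕂 := ℝ) A 0).clm_apply (hasDerivAt_const (0:ℝ) (ω : EE))
    simpa [exp0] using h2
  have h2 : HasFDerivAt h (fderiv ℝ h ω) ((NormedSpace.exp ((0:ℝ) • A)) (ω : EE)) := by
    rw [exp0]; exact (hh.differentiable one_ne_zero _).hasFDerivAt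
  exact (h2.comp_hasDerivAt 0 h1).deriv.symm

noncomputable def rotGen (i j : Fin n) : EuclideanSpace ℝ (Fin n) →L[ℝ] EuclideanSpace ℝ (Fin n) :=
  (EuclideanSpace.proj i : EuclideanSpace ℝ (Fin n) →L[ℝ] ℝ).smulRight (EuclideanSpace.single j 1)
  - (EuclideanSpace.proj j : EuclideanSpace ℝ (Fin n) →L[ℝ] ℝ).smulRight (EuclideanSpace.single i 1)

lemma rotGen_apply (i j : Fin n) (y : EE) : rotGen i j y =
    y i • EuclideanSpace.single j 1 - y j • EuclideanSpace.single i 1 := by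
  simp [rotGen]

lemma rotGen_skew (i j : Fin n) : rotGen i j ∈ skewAdjoint (EE →L[ℝ] EE) := by
  rw [skewAdjoint.mem_iff, ContinuousLinearMap.star_eq_adjoint, eq_comm,
    ContinuousLinearMap.eq_adjoint_iff]
  intro x y
  simp [rotGen_apply, inner_sub_left, inner_sub_right, inner_smul_left, inner_smul_right,
    EuclideanSpace.inner_single_left, EuclideanSpace.inner_single_right]
  ring

lemma basis_sum (y : EE) : ∑ i, y i • EuclideanSpace.single i (1:ℝ) = y := by
  ext k
  simp [Finset.sum_apply, Pi.single_apply]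

lemma fderiv_fderiv_apply {φ : EE → ℝ} (hφ : ContDiff ℝ 2 φ) (y v w : EE) :
    fderiv ℝ (fun z => fderiv ℝ φ z v) y w = fderiv ℝ (fderiv ℝ φ) y w v := by
  have : DifferentiableAt ℝ (fderiv ℝ φ) y :=
    ((hφ.fderiv_right (m := 1) (by norm_num)).differentiable one_ne_zero) y
  have := (this.hasFDerivAt.clm_apply (hasFDerivAt_const v y)).fderiv
  rw [this]; simp

lemma fderiv_symm {φ : EE → ℝ} (hφ : ContDiff ℝ 2 φ) (y v w : EE) :
    fderiv ℝ (fun z => fderiv ℝ φ z v) y w = fderiv ℝ (fun z => fderiv ℝ φ z w) y v := by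
  rw [fderiv_fderiv_apply hφ, fderiv_fderiv_apply hφ]
  exact (hφ.contDiffAt.isSymmSndFDerivAt (by simp)) w v

/-- Darboux -/
lemma darboux {φ : EE → ℝ} (hφ : ContDiff ℝ 2 φ) (x : EE) (r : ℝ) :
    r * ∫ ω : sphere (0 : EE) 1, fderiv ℝ (fun z => fderiv ℝ φ z ω) (x + r • (ω : EE)) ω
        ∂(sphereMeasure n)
    = r * (∫ ω : sphere (0 : EE) 1, laplacian n φ (x + r • (ω : EE)) ∂(sphereMeasure n))
      - ((n : ℝ) - 1) * ∫ ω : sphere (0 : EE) 1, fderiv ℝ φ (x + r • (ω : EE)) ω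
        ∂(sphereMeasure n) := by
  have hd1 : ContDiff ℝ 1 (fderiv ℝ φ) := hφ.fderiv_right (m := 1) (by norm_num)
  have hd2 : Continuous (fderiv ℝ (fderiv ℝ φ)) := hd1.continuous_fderiv one_ne_zero
  have hd1c := hd1.continuous
  let e : Fin n → EE := fun i => EuclideanSpace.single i 1
  have hh : ∀ i j : Fin n, ContDiff ℝ 1 (fun y : EE => y i * fderiv ℝ φ (x + r • y) (e j)) := by
    intro i j
    have h1 : ContDiff ℝ 1 (fun y : EE => fderiv ℝ φ (x + r • y)) := hd1.comp (by fun_prop)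
    exact (by fun_prop : ContDiff ℝ 1 (fun y : EE => y i)).mul (h1.clm_apply contDiff_const)
  have hsum : ∑ i, ∑ j, ∫ ω : sphere (0 : EE) 1,
      fderiv ℝ (fun y : EE => y i * fderiv ℝ φ (x + r • y) (e j)) ω (rotGen i j ω)
        ∂(sphereMeasure n) = 0 :=
    Finset.sum_eq_zero fun i _ => Finset.sum_eq_zero fun j _ =>
      sph_skew _ (rotGen_skew i j) (hh i j)
  have hder : ∀ (i j : Fin n) (y v : EE),
      fderiv ℝ (fun y : EE => y i * fderiv ℝ φ (x + r • y) (e j)) y v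
        = y i * (r * fderiv ℝ (fderiv ℝ φ) (x + r • y) v (e j))
          + v i * fderiv ℝ φ (x + r • y) (e j) := by
    intro i j y v
    have h1 : HasFDerivAt (fun y : EE => x + r • y) (r • ContinuousLinearMap.id ℝ EE) y :=
      ((hasFDerivAt_id y).const_smul r).const_add x
    have h2 := (hd1.differentiable one_ne_zero (x + r • y)).hasFDerivAt.comp y h1
    have h3 := h2.clm_apply (hasFDerivAt_const (e j) y)
    have h4 : HasFDerivAt (fun y : EE => y i) (EuclideanSpace.proj i : EE →L[ℝ] ℝ) y :=
      (EuclideanSpace.proj i : EE →L[ℝ] ℝ).hasFDerivAt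
    have h5 := (h4.mul h3).fderiv
    simp only [Function.comp_def] at h5
    have h6 : (fun y : EE => y i * fderiv ℝ φ (x + r • y) (e j))
      = ((fun y : EE => y i) * fun y => fderiv ℝ φ (x + r • y) (e j)) := rfl
    rw [h6, h5]
    simp
    ring
  have hpt : ∀ ω : EE, ω ∈ sphere (0 : EE) 1 → ∑ i, ∑ j,
      fderiv ℝ (fun y : EE => y i * fderiv ℝ φ (x + r • y) (e j)) ω (rotGen i j ω)
      = r * laplacian n φ (x + r • ω)
        - r * fderiv ℝ (fun z => fderiv ℝ φ z ω) (x + r • ω) ω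
        - ((n : ℝ) - 1) * fderiv ℝ φ (x + r • ω) ω := by
    intro ω hω
    have hnorm : ∑ i, ω i * ω i = 1 := by
      have h : ‖ω‖ = 1 := by simpa using hω
      have := EuclideanSpace.real_norm_sq_eq ω
      rw [h] at this
      simp only [pow_two] at this
      linarith
    set p := x + r • ω
    have hlap : laplacian n φ p = ∑ j, fderiv ℝ (fderiv ℝ φ) p (e j) (e j) := by
      unfold laplacian
      exact Finset.sum_congr rfl fun i _ => fderiv_fderiv_apply hφ _ _ _
    have hB : ∑ i, ω i • e i = ω := basis_sum ω
    have hD2 : fderiv ℝ (fun z => fderiv ℝ φ z ω) p ω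
        = ∑ i, ∑ j, ω i * ω j * fderiv ℝ (fderiv ℝ φ) p (e i) (e j) := by
      rw [fderiv_fderiv_apply hφ]
      conv_lhs => rw [← hB]
      simp only [map_sum, map_smul, sum_apply, smul_apply,
        smul_eq_mul, Finset.mul_sum]
      rw [Finset.sum_comm]
      refine Finset.sum_congr rfl fun i _ => Finset.sum_congr rfl fun j _ => by ring
    have hD1 : fderiv ℝ φ p ω = ∑ j, ω j * fderiv ℝ φ p (e j) := by
      conv_lhs => rw [← hB]
      simp
    have hterm : ∀ i j : Fin n,
        fderiv ℝ (fun y : EE => y i * fderiv ℝ φ (x + r • y) (e j)) ω (rotGen i j ω)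
        = r * (ω i * ω i * fderiv ℝ (fderiv ℝ φ) p (e j) (e j))
          - r * (ω i * ω j * fderiv ℝ (fderiv ℝ φ) p (e i) (e j))
          + (if i = j then ω i * fderiv ℝ φ p (e j) else 0)
          - ω j * fderiv ℝ φ p (e j) := by
      intro i j
      rw [hder, rotGen_apply]
      have : (ω i • EuclideanSpace.single j (1:ℝ) - ω j • EuclideanSpace.single i (1:ℝ) : EE) i
          = (if i = j then ω i else 0) - ω j := by
        simp
      rw [this]
      simp only [map_sub, map_smul, sub_apply, smul_apply,
        smul_eq_mul]
      change ω i * (r * (ω i * fderiv ℝ (fderiv ℝ φ) p (e j) (e j)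
        - ω j * fderiv ℝ (fderiv ℝ φ) p (e i) (e j))) + _ * fderiv ℝ φ p (e j) = _
      split_ifs <;> ring
    simp only [hterm]
    rw [hlap, hD2, hD1]
    simp only [Finset.sum_sub_distrib, Finset.sum_add_distrib, ← Finset.mul_sum,
      ← Finset.sum_mul, hnorm]
    simp only [Finset.sum_ite_eq, Finset.mem_univ, if_true, Finset.sum_const, Finset.card_univ,
      Fintype.card_fin, nsmul_eq_mul]
    ring
  have hlapc : Continuous (laplacian n φ) := by
    have : laplacian n φ = fun y => ∑ j, fderiv ℝ (fderiv ℝ φ) y (e j) (e j) := by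
      funext y
      unfold laplacian
      exact Finset.sum_congr rfl fun i _ => fderiv_fderiv_apply hφ _ _ _
    rw [this]
    fun_prop
  have hi : ∀ i j : Fin n, Integrable (fun ω : sphere (0 : EE) 1 =>
      fderiv ℝ (fun y : EE => y i * fderiv ℝ φ (x + r • y) (e j)) ω (rotGen i j ω))
        (sphereMeasure n) := by
    intro i j
    have := (hh i j).continuous_fderiv one_ne_zero
    exact sph_integrable (Ψ := fun ω => fderiv ℝ
      (fun y : EE => y i * fderiv ℝ φ (x + r • y) (e j)) ω (rotGen i j ω)) (by fun_prop)
  have hs2 : ∑ i, ∑ j, ∫ ω : sphere (0 : EE) 1,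
      fderiv ℝ (fun y : EE => y i * fderiv ℝ φ (x + r • y) (e j)) ω (rotGen i j ω)
        ∂(sphereMeasure n) = ∫ ω : sphere (0 : EE) 1,
        (r * laplacian n φ (x + r • (ω : EE))
        - r * fderiv ℝ (fun z => fderiv ℝ φ z ω) (x + r • (ω : EE)) ω
        - ((n : ℝ) - 1) * fderiv ℝ φ (x + r • (ω : EE)) ω) ∂(sphereMeasure n) := by
    simp only [← hpt _ (Subtype.mem _)]
    rw [integral_finsetSum _ (fun i _ => integrable_finsetSum _ (fun j _ => hi i j))]
    exact Finset.sum_congr rfl fun i _ => (integral_finsetSum _ (fun j _ => hi i j)).symm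
  rw [hs2, integral_sub, integral_sub, integral_const_mul, integral_const_mul,
    integral_const_mul] at hsum
  · linarith
  · exact sph_integrable (Ψ := fun ω => r * laplacian n φ (x + r • ω)) (by fun_prop)
  · simp only [fderiv_fderiv_apply hφ]
    exact sph_integrable (Ψ := fun ω => r * fderiv ℝ (fderiv ℝ φ) (x + r • ω) ω ω) (by fun_prop)
  · simp only [fderiv_fderiv_apply hφ]
    exact sph_integrable (Ψ := fun ω => r * laplacian n φ (x + r • ω)
      - r * fderiv ℝ (fderiv ℝ φ) (x + r • ω) ω ω) (by fun_prop)
  · exact sph_integrable (Ψ := fun ω => ((n : ℝ) - 1) * fderiv ℝ φ (x + r • ω) ω) (by fun_prop)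

end sph
lemma par_ioc {a b : ℝ} : ∀ᵐ s ∂(volume.restrict (Set.Ioc a b)), id s ∈ Set.Icc a b := by
  refine (ae_restrict_mem measurableSet_Ioc).mono fun s hs => Set.Ioc_subset_Icc_self hs

lemma leibniz {k k1 : ℝ × ℝ → ℝ} (hk : ContDiff ℝ 1 k)
    (hk1 : ∀ r τ, HasDerivAt (fun r => k (r, τ)) (k1 (r, τ)) r) (t : ℝ) :
    HasDerivAt (fun t => ∫ τ in (0:ℝ)..t, k (t - τ, τ))
      (k (0, t) + ∫ τ in (0:ℝ)..t, k1 (t - τ, τ)) t := by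
  have hd : ∀ z, HasFDerivAt k (fderiv ℝ k z) z := fun z =>
    (hk.differentiable one_ne_zero z).hasFDerivAt
  have hc : Continuous (fderiv ℝ k) := hk.continuous_fderiv one_ne_zero
  have hkc := hk.continuous
  have hk1' : ∀ z, k1 z = fderiv ℝ k z (1, 0) := by
    rintro ⟨r, τ⟩
    have h1 : HasDerivAt (fun r : ℝ => (r, τ)) ((1:ℝ), (0:ℝ)) r :=
      (hasDerivAt_id r).prodMk (hasDerivAt_const _ _)
    exact (hk1 r τ).unique ((hd (r, τ)).comp_hasDerivAt r h1)
  have e1 : ∀ (q : ℝ × ℝ → ℝ) (t : ℝ), ∫ τ in (0:ℝ)..t, q (t - τ, τ)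
      = ∫ s in (0:ℝ)..1, t * q (t - t * s, t * s) := by
    intro q t
    rw [intervalIntegral.integral_const_mul]
    have := intervalIntegral.mul_integral_comp_mul_left (a := 0) (b := 1)
      (f := fun τ => q (t - τ, τ)) (c := t)
    simp only [mul_zero, mul_one] at this
    exact this.symm
  rw [funext (e1 k), e1 k1]
  simp only [intervalIntegral.integral_of_le zero_le_one]
  have hΦ : ContDiff ℝ 1 (fun z : ℝ × ℝ => z.2 * k (z.2 - z.2 * z.1, z.2 * z.1)) := by
    have : ContDiff ℝ 1 (fun z : ℝ × ℝ => k (z.2 - z.2 * z.1, z.2 * z.1)) :=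
      hk.comp (by fun_prop)
    fun_prop
  have key := par_hasDerivAt (μ := volume.restrict (Set.Ioc (0:ℝ) 1)) measurable_id
    isCompact_Icc par_ioc hΦ t
  convert key using 1
  simp only [id_eq]
  rw [← intervalIntegral.integral_of_le zero_le_one, ← intervalIntegral.integral_of_le zero_le_one]
  have hsplit : ∀ z (a b : ℝ), fderiv ℝ k z (a, b)
      = a * fderiv ℝ k z (1, 0) + b * fderiv ℝ k z (0, 1) := by
    intro z a b
    have : ((a, b) : ℝ × ℝ) = a • (1, 0) + b • (0, 1) := by simp
    rw [this, map_add, map_smul, map_smul]; rfl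
  have hder : ∀ s : ℝ, deriv (fun q => q * k (q - q * s, q * s)) t
      = t * k1 (t - t * s, t * s) + (k (t - t * s, t * s) + s * (fderiv ℝ k (t - t * s, t * s) (-t, t))) := by
    intro s
    have h1 : HasDerivAt (fun q : ℝ => (q - q * s, q * s)) (1 - 1 * s, 1 * s) t :=
      ((hasDerivAt_id t).sub ((hasDerivAt_id t).mul_const s)).prodMk ((hasDerivAt_id t).mul_const s)
    have h2 := (hasDerivAt_id t).mul ((hd (t - t * s, t * s)).comp_hasDerivAt t h1)
    have h3 := h2.deriv
    have h4 : (fun q => q * k (q - q * s, q * s))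
      = (id * (k ∘ fun q : ℝ => (q - q * s, q * s))) := rfl
    rw [h4, h3, hk1', hsplit _ (-t) t, hsplit _ (1 - 1 * s)]
    simp
    ring
  simp only [hder, id_eq]
  have hk1c : Continuous k1 := by rw [funext hk1']; fun_prop
  rw [intervalIntegral.integral_add]
  · have : ∫ s in (0:ℝ)..1, (k (t - t * s, t * s) + s * (fderiv ℝ k (t - t * s, t * s) (-t, t)))
        = k (0, t) := by
      rw [intervalIntegral.integral_eq_sub_of_hasDerivAt (f := fun s => s * k (t - t * s, t * s))]
      · simp
      · intro s _
        have h1 : HasDerivAt (fun s : ℝ => (t - t * s, t * s)) (-(t * 1), t * 1) s :=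
          (((hasDerivAt_id s).const_mul t).const_sub t).prodMk ((hasDerivAt_id s).const_mul t)
        have h2 := (hasDerivAt_id s).mul ((hd (t - t * s, t * s)).comp_hasDerivAt s h1)
        refine HasDerivAt.congr_deriv (f := fun s => s * k (t - t * s, t * s)) h2 ?_
        simp
      · exact Continuous.intervalIntegrable (by fun_prop) _ _
    rw [this, add_comm]
  · exact Continuous.intervalIntegrable (by fun_prop) _ _
  · exact Continuous.intervalIntegrable (by fun_prop) _ _

section lap
variable {n : ℕ}

local notation "EE" => EuclideanSpace ℝ (Fin n)

lemma lap_eq {φ : EE → ℝ} (hφ : ContDiff ℝ 2 φ) (x : EE) : laplacian n φ x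
    = ∑ j, fderiv ℝ (fderiv ℝ φ) x (EuclideanSpace.single j 1) (EuclideanSpace.single j 1) := by
  unfold laplacian
  exact Finset.sum_congr rfl fun i _ => fderiv_fderiv_apply hφ _ _ _

lemma dv_contDiff {k : ℕ} {φ : EE → ℝ} (hφ : ContDiff ℝ (k + 1) φ) (v : EE) :
    ContDiff ℝ k (fun z => fderiv ℝ φ z v) :=
  (hφ.fderiv_right (m := k) le_rfl).clm_apply contDiff_const

lemma lap_add {φ ψ : EE → ℝ} (hφ : ContDiff ℝ 2 φ) (hψ : ContDiff ℝ 2 ψ) (x : EE) :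
    laplacian n (fun y => φ y + ψ y) x = laplacian n φ x + laplacian n ψ x := by
  unfold laplacian
  rw [← Finset.sum_add_distrib]
  refine Finset.sum_congr rfl fun i _ => ?_
  have h1 : (fun y => fderiv ℝ (fun y => φ y + ψ y) y (EuclideanSpace.single i 1))
      = fun y => fderiv ℝ φ y (EuclideanSpace.single i 1)
        + fderiv ℝ ψ y (EuclideanSpace.single i 1) := by
    funext y
    rw [fderiv_fun_add (hφ.differentiable two_ne_zero _) (hψ.differentiable two_ne_zero _)]
    rfl
  rw [h1, fderiv_fun_add]
  · rfl
  · exact (dv_contDiff (k := 1) (by norm_num; exact hφ) _).differentiable (by simp) _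
  · exact (dv_contDiff (k := 1) (by norm_num; exact hψ) _).differentiable (by simp) _

lemma lap_const_mul {φ : EE → ℝ} (hφ : ContDiff ℝ 2 φ) (a : ℝ) (x : EE) :
    laplacian n (fun y => a * φ y) x = a * laplacian n φ x := by
  unfold laplacian
  rw [Finset.mul_sum]
  refine Finset.sum_congr rfl fun i _ => ?_
  have h1 : (fun y => fderiv ℝ (fun y => a * φ y) y (EuclideanSpace.single i 1))
      = fun y => a * fderiv ℝ φ y (EuclideanSpace.single i 1) := by
    funext y
    rw [fderiv_const_mul (hφ.differentiable two_ne_zero _)]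
    rfl
  rw [h1, fderiv_const_mul]
  · rfl
  · exact (dv_contDiff (k := 1) (by norm_num; exact hφ) _).differentiable (by simp) _

lemma lap_trans (φ : EE → ℝ) (v x : EE) :
    laplacian n (fun y => φ (y + v)) x = laplacian n φ (x + v) := by
  unfold laplacian
  refine Finset.sum_congr rfl fun i _ => ?_
  simp only [fderiv_comp_add_right]
  rw [fderiv_comp_add_right (f := fun y => fderiv ℝ φ y (EuclideanSpace.single i 1))]

lemma lap_contDiff {k : ℕ} {φ : EE → ℝ} (hφ : ContDiff ℝ (k + 2) φ) :
    ContDiff ℝ k (laplacian n φ) := by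
  unfold laplacian
  refine ContDiff.sum fun i _ => ?_
  refine dv_contDiff (φ := fun y => fderiv ℝ φ y (EuclideanSpace.single i 1)) ?_ _
  have := dv_contDiff (k := k + 1) (φ := φ) (by push_cast; rw [add_assoc]; norm_num; exact hφ)
    (EuclideanSpace.single i 1)
  exact_mod_cast this

lemma lap_dv {φ : EE → ℝ} (hφ : ContDiff ℝ 3 φ) (x v : EE) :
    laplacian n (fun y => fderiv ℝ φ y v) x = fderiv ℝ (laplacian n φ) x v := by
  have h2 : ContDiff ℝ 2 φ := hφ.of_le (by norm_num)
  have hd : ∀ w, ContDiff ℝ 2 (fun y => fderiv ℝ φ y w) :=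
    fun w => dv_contDiff (k := 2) (by norm_num; exact hφ) w
  have e : laplacian n φ = fun y => ∑ i, fderiv ℝ (fun y => fderiv ℝ φ y (EuclideanSpace.single i 1))
      y (EuclideanSpace.single i 1) := rfl
  rw [e, fderiv_fun_sum]
  · rw [sum_apply]
    unfold laplacian
    refine Finset.sum_congr rfl fun i _ => ?_
    simp only [fun y => fderiv_symm h2 y v (EuclideanSpace.single i 1)]
    exact fderiv_symm (hd _) _ _ _
  · intro i _
    exact (dv_contDiff (k := 1) (by norm_num; exact hd _) _).differentiable (by simp) _

lemma line_hasDerivAt {φ : EE → ℝ} (hφ : ContDiff ℝ 1 φ) (x v : EE) (r : ℝ) :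
    HasDerivAt (fun r => φ (x + r • v)) (fderiv ℝ φ (x + r • v) v) r := by
  have h1 : HasDerivAt (fun r : ℝ => x + r • v) v r := by
    simpa using ((hasDerivAt_id r).smul_const v).const_add x
  exact (hφ.differentiable one_ne_zero _).hasFDerivAt.comp_hasDerivAt r h1

lemma sph_deriv {φ : EE → ℝ} (hφ : ContDiff ℝ 1 φ) (x : EE) (r : ℝ) :
    HasDerivAt (fun r => ∫ ω : sphere (0 : EE) 1, φ (x + r • (ω : EE)) ∂(sphereMeasure n))
      (∫ ω : sphere (0 : EE) 1, fderiv ℝ φ (x + r • (ω : EE)) ω ∂(sphereMeasure n)) r := by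
  have key := par_hasDerivAt (μ := sphereMeasure n) sph_c sph_K sph_cK
    (Φ := fun z : EE × ℝ => φ (x + z.2 • z.1)) (hφ.comp (by fun_prop)) r
  simpa only [(line_hasDerivAt hφ _ _ _).deriv] using key

lemma sph_deriv2 {φ : EE → ℝ} (hφ : ContDiff ℝ 2 φ) (x : EE) (r : ℝ) :
    HasDerivAt (fun r => ∫ ω : sphere (0 : EE) 1, fderiv ℝ φ (x + r • (ω : EE)) ω ∂(sphereMeasure n))
      (∫ ω : sphere (0 : EE) 1, fderiv ℝ (fun z => fderiv ℝ φ z ω) (x + r • (ω : EE)) ω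
        ∂(sphereMeasure n)) r := by
  have hd1 : ContDiff ℝ 1 (fderiv ℝ φ) := hφ.fderiv_right (m := 1) (by norm_num)
  have key := par_hasDerivAt (μ := sphereMeasure n) sph_c sph_K sph_cK
    (Φ := fun z : EE × ℝ => fderiv ℝ φ (x + z.2 • z.1) z.1)
    ((hd1.comp (by fun_prop)).clm_apply contDiff_fst) r
  have := fun ω : EE => (line_hasDerivAt (φ := fun z => fderiv ℝ φ z ω)
    (dv_contDiff (k := 1) (by norm_num; exact hφ) _) x ω r).deriv
  simpa only [this] using key

lemma sph_lap {φ : EE → ℝ} (hφ : ContDiff ℝ 2 φ) (x : EE) (r : ℝ) :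
    laplacian n (fun x => ∫ ω : sphere (0 : EE) 1, φ (x + r • (ω : EE)) ∂(sphereMeasure n)) x
      = ∫ ω : sphere (0 : EE) 1, laplacian n φ (x + r • (ω : EE)) ∂(sphereMeasure n) := by
  have key := par_laplacian (μ := sphereMeasure n) sph_c sph_K sph_cK
    (Φ := fun z : EE × EE => φ (z.2 + r • z.1)) (hφ.comp (by fun_prop)) x
  simpa only [lap_trans] using key

lemma sph_lap2 {φ : EE → ℝ} (hφ : ContDiff ℝ 3 φ) (x : EE) (r : ℝ) :
    laplacian n (fun x => ∫ ω : sphere (0 : EE) 1, fderiv ℝ φ (x + r • (ω : EE)) ω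
        ∂(sphereMeasure n)) x
      = ∫ ω : sphere (0 : EE) 1, fderiv ℝ (laplacian n φ) (x + r • (ω : EE)) ω
        ∂(sphereMeasure n) := by
  have hd1 : ContDiff ℝ 2 (fderiv ℝ φ) := hφ.fderiv_right (m := 2) (by norm_num)
  have key := par_laplacian (μ := sphereMeasure n) sph_c sph_K sph_cK
    (Φ := fun z : EE × EE => fderiv ℝ φ (z.2 + r • z.1) z.1)
    ((hd1.comp (by fun_prop)).clm_apply contDiff_fst) x
  have := fun ω : EE => lap_trans (fun y => fderiv ℝ φ y ω) (r • ω) x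
  simpa only [this, lap_dv hφ] using key

lemma sph_contDiff {φ : EE → ℝ} (hφ : ContDiff ℝ 2 φ) (r : ℝ) :
    ContDiff ℝ 2 (fun x => ∫ ω : sphere (0 : EE) 1, φ (x + r • (ω : EE)) ∂(sphereMeasure n)) :=
  par_contDiff (μ := sphereMeasure n) sph_c sph_K sph_cK 2
    (Φ := fun z : EE × EE => φ (z.2 + r • z.1)) (hφ.comp (by fun_prop))

lemma sph_contDiff2 {φ : EE → ℝ} (hφ : ContDiff ℝ 3 φ) (r : ℝ) :
    ContDiff ℝ 2 (fun x => ∫ ω : sphere (0 : EE) 1, fderiv ℝ φ (x + r • (ω : EE)) ω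
      ∂(sphereMeasure n)) := by
  have hd1 : ContDiff ℝ 2 (fderiv ℝ φ) := hφ.fderiv_right (m := 2) (by norm_num)
  exact par_contDiff (μ := sphereMeasure n) sph_c sph_K sph_cK 2
    (Φ := fun z : EE × EE => fderiv ℝ φ (z.2 + r • z.1) z.1)
    ((hd1.comp (by fun_prop)).clm_apply contDiff_fst)

lemma linearPart_eq {f g : EE → ℝ} (hf : ContDiff ℝ 3 f) (hg : ContDiff ℝ 2 g) (x : EE) (t : ℝ) :
    linearPart n f g x t = (sphereArea n)⁻¹ *
      (t / ((n:ℝ) - 2) * (∫ ω : sphere (0 : EE) 1, fderiv ℝ f (x + t • (ω : EE)) ω ∂(sphereMeasure n))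
      + (∫ ω : sphere (0 : EE) 1, f (x + t • (ω : EE)) ∂(sphereMeasure n))
      + t * ∫ ω : sphere (0 : EE) 1, g (x + t • (ω : EE)) ∂(sphereMeasure n)) := by
  have hfc := hf.continuous
  have hgc := hg.continuous
  have hfc' := hf.continuous_fderiv (by norm_num)
  unfold linearPart
  simp only [mul_div_right_comm]
  rw [integral_add, integral_add, integral_const_mul, integral_const_mul]
  · exact sph_integrable (Ψ := fun ω => t / ((n:ℝ) - 2) * fderiv ℝ f (x + t • ω) ω) (by fun_prop)
  · exact sph_integrable (Ψ := fun ω => f (x + t • ω)) (by fun_prop)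
  · exact sph_integrable (Ψ := fun ω => t / ((n:ℝ) - 2) * fderiv ℝ f (x + t • ω) ω
      + f (x + t • ω)) (by fun_prop)
  · exact sph_integrable (Ψ := fun ω => t * g (x + t • ω)) (by fun_prop)

end lap
section duh
variable {n : ℕ}

local notation "EE" => EuclideanSpace ℝ (Fin n)

lemma slice1 {F : EE → ℝ → ℝ}
    (hF : ContDiff ℝ 2 (fun p : EE × ℝ => F p.1 p.2)) (τ : ℝ) (y v : EE) :
    fderiv ℝ (fun y => F y τ) y v = fderiv ℝ (fun p : EE × ℝ => F p.1 p.2) (y, τ) (v, 0) := by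
  have h1 := (hF.differentiable two_ne_zero (y, τ)).hasFDerivAt
  have h2 := (h1.comp (f := fun e : EE => (e, τ)) y (hasFDerivAt_prodMk_left (𝕜 := ℝ) y τ)).fderiv
  simp only [Function.comp_def] at h2
  rw [h2]; simp

lemma slice_contDiff {F : EE → ℝ → ℝ}
    (hF : ContDiff ℝ 2 (fun p : EE × ℝ => F p.1 p.2)) (τ : ℝ) : ContDiff ℝ 2 (fun y => F y τ) :=
  hF.comp (f := fun y => (y, τ)) (by fun_prop)

lemma slice_lap {F : EE → ℝ → ℝ}
    (hF : ContDiff ℝ 2 (fun p : EE × ℝ => F p.1 p.2)) (τ : ℝ) (y : EE) :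
    laplacian n (fun y => F y τ) y = ∑ i, fderiv ℝ (fderiv ℝ (fun p : EE × ℝ => F p.1 p.2)) (y, τ)
      (EuclideanSpace.single i 1, 0) (EuclideanSpace.single i 1, 0) := by
  unfold laplacian
  refine Finset.sum_congr rfl fun i _ => ?_
  simp only [slice1 hF]
  have hd : ContDiff ℝ 1 (fderiv ℝ (fun p : EE × ℝ => F p.1 p.2)) :=
    hF.fderiv_right (m := 1) (by norm_num)
  have h1 := (hd.differentiable one_ne_zero (y, τ)).hasFDerivAt
  have h2 := h1.comp (f := fun e : EE => (e, τ)) y (hasFDerivAt_prodMk_left (𝕜 := ℝ) y τ)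
  have h3 := (h2.clm_apply (hasFDerivAt_const
    ((EuclideanSpace.single i 1, 0) : EE × ℝ) y)).fderiv
  simp only [Function.comp_def] at h3
  rw [h3]; simp

lemma duh_main {F : EE → ℝ → ℝ} (hF : ContDiff ℝ 2 (fun p : EE × ℝ => F p.1 p.2)) (x : EE) :
    ∃ N1 N2 : ℝ → ℝ,
      (∀ t, HasDerivAt (fun t => ∫ τ in (0 : ℝ)..t, (t - τ) *
        ∫ ω : sphere (0 : EE) 1, F (x + (t - τ) • (ω : EE)) τ ∂(sphereMeasure n)) (N1 t) t) ∧
      (∀ t, HasDerivAt N1 (N2 t) t) ∧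
      (∀ t, 0 ≤ t → ContDiff ℝ 2 (fun y => ∫ τ in (0 : ℝ)..t, (t - τ) *
        ∫ ω : sphere (0 : EE) 1, F (y + (t - τ) • (ω : EE)) τ ∂(sphereMeasure n))) ∧
      (∀ t, 0 ≤ t → N2 t - laplacian n (fun y => ∫ τ in (0 : ℝ)..t, (t - τ) *
        ∫ ω : sphere (0 : EE) 1, F (y + (t - τ) • (ω : EE)) τ ∂(sphereMeasure n)) x
        = ((n : ℝ) - 2) * (sphereArea n * F x t) - ((n : ℝ) - 3) *
          ((∫ τ in (0 : ℝ)..t, ∫ ω : sphere (0 : EE) 1,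
            deriv (fun s => F (x + (t - τ) • (ω : EE)) s) τ ∂(sphereMeasure n))
          + ∫ ω : sphere (0 : EE) 1, F (x + t • (ω : EE)) 0 ∂(sphereMeasure n))) := by
  set Fu : EE × ℝ → ℝ := fun p => F p.1 p.2 with hFu
  have hF1 : ContDiff ℝ 1 Fu := hF.of_le (by norm_num)
  have hd : ContDiff ℝ 1 (fderiv ℝ Fu) := hF.fderiv_right (m := 1) (by norm_num)
  have hdc := hd.continuous
  have hFc := hF.continuous
  have hd2 : Continuous (fderiv ℝ (fderiv ℝ Fu)) := hd.continuous_fderiv one_ne_zero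
  -- spherical integrals
  let G : ℝ × ℝ → ℝ := fun z => ∫ ω : sphere (0 : EE) 1, Fu (x + z.1 • (ω : EE), z.2)
    ∂(sphereMeasure n)
  let G1 : ℝ × ℝ → ℝ := fun z => ∫ ω : sphere (0 : EE) 1,
    fderiv ℝ Fu (x + z.1 • (ω : EE), z.2) (ω, 0) ∂(sphereMeasure n)
  let Gt : ℝ × ℝ → ℝ := fun z => ∫ ω : sphere (0 : EE) 1,
    fderiv ℝ Fu (x + z.1 • (ω : EE), z.2) (0, 1) ∂(sphereMeasure n)
  let GLap : ℝ × ℝ → ℝ := fun z => ∫ ω : sphere (0 : EE) 1,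
    laplacian n (fun y => F y z.2) (x + z.1 • (ω : EE)) ∂(sphereMeasure n)
  have hG : ContDiff ℝ 2 G := par_contDiff (μ := sphereMeasure n) sph_c sph_K sph_cK 2
    (Φ := fun z : EE × (ℝ × ℝ) => Fu (x + z.2.1 • z.1, z.2.2)) (hF.comp (by fun_prop))
  have hGc := hG.continuous
  have hG1 : ContDiff ℝ 1 G1 := by
    have hz : ContDiff ℝ 1 (fun z : EE × (ℝ × ℝ) => fderiv ℝ Fu (x + z.2.1 • z.1, z.2.2)) :=
      hd.comp (by fun_prop)
    exact par_contDiff (μ := sphereMeasure n) sph_c sph_K sph_cK 1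
      (Φ := fun z : EE × (ℝ × ℝ) => fderiv ℝ Fu (x + z.2.1 • z.1, z.2.2) (z.1, 0))
      (hz.clm_apply (by fun_prop))
  have hG1c := hG1.continuous
  have hGt : Continuous Gt := par_continuous (μ := sphereMeasure n) sph_c sph_K sph_cK
    (Φ := fun z : EE × (ℝ × ℝ) => fderiv ℝ Fu (x + z.2.1 • z.1, z.2.2) (0, 1)) (by fun_prop)
  have hGL : Continuous GLap := by
    have := par_continuous (μ := sphereMeasure n) sph_c sph_K sph_cK
      (Φ := fun z : EE × (ℝ × ℝ) => laplacian n (fun y => F y z.2.2) (x + z.2.1 • z.1)) (by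
        simp only [slice_lap hF]
        fun_prop)
    exact this
  have hGr : ∀ r τ, HasDerivAt (fun r => G (r, τ)) (G1 (r, τ)) r := by
    intro r τ
    have := sph_deriv ((slice_contDiff hF τ).of_le one_le_two) x r
    simpa only [slice1 hF] using this
  have hG1r : ∀ r τ, ∃ D, HasDerivAt (fun r => G1 (r, τ)) D r
      ∧ r * D = r * GLap (r, τ) - ((n:ℝ) - 1) * G1 (r, τ) := by
    intro r τ
    have h1 := sph_deriv2 (slice_contDiff hF τ) x r
    have h2 := darboux (slice_contDiff hF τ) x r
    have e3 : ∀ r, (∫ ω : sphere (0 : EE) 1, fderiv ℝ (fun y => F y τ) (x + r • (ω : EE)) ω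
        ∂(sphereMeasure n)) = G1 (r, τ) := by
      intro r
      simp only [slice1 hF]
      rfl
    rw [e3] at h2
    rw [funext e3] at h1
    exact ⟨_, h1, h2⟩
  -- first derivative
  let N1 : ℝ → ℝ := fun t => ∫ τ in (0:ℝ)..t,
    (fun z : ℝ × ℝ => G z + z.1 * G1 z) (t - τ, τ)
  let N2 : ℝ → ℝ := fun t => G (0, t) + ∫ τ in (0:ℝ)..t,
    (fun z : ℝ × ℝ => z.1 * GLap z - ((n:ℝ) - 3) * G1 z) (t - τ, τ)
  have hfull : ∀ t : ℝ, ContDiff ℝ 2 (fun z : ℝ × EE => (t - z.1) *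
        ∫ ω : sphere (0 : EE) 1, F (z.2 + (t - z.1) • (ω : EE)) z.1 ∂(sphereMeasure n)) := by
    intro t
    have h : ContDiff ℝ 2 (fun z : ℝ × EE =>
        ∫ ω : sphere (0 : EE) 1, F (z.2 + (t - z.1) • (ω : EE)) z.1 ∂(sphereMeasure n)) :=
      par_contDiff (μ := sphereMeasure n) sph_c sph_K sph_cK 2
        (Φ := fun z : EE × (ℝ × EE) => Fu (z.2.2 + (t - z.2.1) • z.1, z.2.1))
        (hF.comp (by fun_prop))
    fun_prop
  refine ⟨N1, N2, ?_, ?_, ?_, ?_⟩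
  · intro t
    have hk : ContDiff ℝ 1 (fun z : ℝ × ℝ => z.1 * G z) := by
      have := hG.of_le (m := 1) (by norm_num)
      fun_prop
    have := leibniz (k := fun z => z.1 * G z) (k1 := fun z => G z + z.1 * G1 z) hk (by
      intro r τ
      refine HasDerivAt.congr_deriv (f := fun r => r * G (r, τ))
        ((hasDerivAt_id r).mul (hGr r τ)) ?_
      simp) t
    simp only [zero_mul, zero_add] at this
    exact this
  · intro t
    have hk : ContDiff ℝ 1 (fun z : ℝ × ℝ => G z + z.1 * G1 z) := by
      have := hG.of_le (m := 1) (by norm_num)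
      fun_prop
    have := leibniz (k := fun z => G z + z.1 * G1 z)
      (k1 := fun z => z.1 * GLap z - ((n:ℝ) - 3) * G1 z) hk (by
        intro r τ
        obtain ⟨D, hD, hD2⟩ := hG1r r τ
        refine HasDerivAt.congr_deriv (f := fun r => G (r, τ) + r * G1 (r, τ))
          ((hGr r τ).add ((hasDerivAt_id r).mul hD)) ?_
        simp only [id_eq, hD2]
        ring) t
    simp only [zero_mul, add_zero] at this
    exact this
  · intro t ht
    simp only [intervalIntegral.integral_of_le ht]
    exact par_contDiff (μ := volume.restrict (Set.Ioc (0:ℝ) t)) measurable_id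
      isCompact_Icc par_ioc 2 (hfull t)
  · intro t ht
    have hL : laplacian n (fun y => ∫ τ in (0 : ℝ)..t, (t - τ) *
        ∫ ω : sphere (0 : EE) 1, F (y + (t - τ) • (ω : EE)) τ ∂(sphereMeasure n)) x
        = ∫ τ in (0 : ℝ)..t, (t - τ) * GLap (t - τ, τ) := by
      simp only [intervalIntegral.integral_of_le ht]
      have := par_laplacian (μ := volume.restrict (Set.Ioc (0:ℝ) t)) measurable_id
        isCompact_Icc par_ioc (hfull t) x
      simp only [id_eq] at this
      rw [this]
      refine integral_congr_ae (Filter.Eventually.of_forall fun τ => ?_)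
      have h1 := lap_const_mul (sph_contDiff (slice_contDiff hF τ) (t - τ)) (t - τ) x
      have h2 := sph_lap (slice_contDiff hF τ) x (t - τ)
      rw [h2] at h1
      exact h1
    have hN2 : N2 t = G (0, t) + ((∫ τ in (0 : ℝ)..t, (t - τ) * GLap (t - τ, τ))
        - ((n:ℝ) - 3) * ∫ τ in (0 : ℝ)..t, G1 (t - τ, τ)) := by
      simp only [N2]
      rw [intervalIntegral.integral_sub, intervalIntegral.integral_const_mul]
      · exact Continuous.intervalIntegrable (by fun_prop) _ _
      · exact Continuous.intervalIntegrable (by fun_prop) _ _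
    have hG0 : G (0, t) = sphereArea n * F x t := by
      simp only [G, hFu, zero_smul, add_zero, integral_const, smul_eq_mul]
      rfl
    have hFTC : (∫ τ in (0 : ℝ)..t, Gt (t - τ, τ)) - (∫ τ in (0 : ℝ)..t, G1 (t - τ, τ))
        = G (0, t) - G (t, 0) := by
      rw [← intervalIntegral.integral_sub (Continuous.intervalIntegrable (by fun_prop) _ _)
        (Continuous.intervalIntegrable (by fun_prop) _ _)]
      rw [intervalIntegral.integral_eq_sub_of_hasDerivAt (f := fun τ => G (t - τ, τ))]
      · simp
      · intro τ _
        have key := par_hasDerivAt (μ := sphereMeasure n) sph_c sph_K sph_cK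
          (Φ := fun z : EE × ℝ => Fu (x + (t - z.2) • z.1, z.2)) (hF1.comp (by fun_prop)) τ
        refine HasDerivAt.congr_deriv (f := fun τ => G (t - τ, τ)) key ?_
        simp only [Gt, G1]
        rw [← integral_sub]
        · refine integral_congr_ae (Filter.Eventually.of_forall fun ω => ?_)
          have h1 : HasDerivAt (fun q : ℝ => (x + (t - q) • (ω : EE), q))
              ((-1 : ℝ) • (ω : EE), (1:ℝ)) τ :=
            ((((hasDerivAt_id τ).const_sub t).smul_const (ω : EE)).const_add x).prodMk
              (hasDerivAt_id τ)
          have h2 := ((hF1.differentiable one_ne_zero _).hasFDerivAt.comp_hasDerivAt τ h1).deriv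
          refine h2.trans ?_
          have h3 : (((-1 : ℝ) • (ω : EE), (1:ℝ)) : EE × ℝ) = (0, 1) - ((ω : EE), 0) := by simp
          rw [h3, map_sub]
        · exact sph_integrable (Ψ := fun ω => fderiv ℝ Fu (x + (t - τ) • ω, τ) (0, 1))
            (by fun_prop)
        · exact sph_integrable (Ψ := fun ω => fderiv ℝ Fu (x + (t - τ) • ω, τ) (ω, 0))
            (by fun_prop)
      · exact Continuous.intervalIntegrable (by fun_prop) _ _
    have hGt' : (∫ τ in (0 : ℝ)..t, ∫ ω : sphere (0 : EE) 1,
            deriv (fun s => F (x + (t - τ) • (ω : EE)) s) τ ∂(sphereMeasure n))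
          = ∫ τ in (0 : ℝ)..t, Gt (t - τ, τ) := by
      have hh : ∀ (y : EE) (τ : ℝ), deriv (fun s => F y s) τ = fderiv ℝ Fu (y, τ) (0, 1) := by
        intro y τ
        have := fderiv_slice hF1 y τ 1
        rw [fderiv_apply_one_eq_deriv] at this
        exact this
      simp only [hh]
      rfl
    have hGt0 : ∫ ω : sphere (0 : EE) 1, F (x + t • (ω : EE)) 0 ∂(sphereMeasure n) = G (t, 0) := rfl
    rw [hN2, hL, hGt', hGt0]
    have e : ∫ τ in (0 : ℝ)..t, G1 (t - τ, τ)
      = (∫ τ in (0 : ℝ)..t, Gt (t - τ, τ)) - G (0, t) + G (t, 0) := by linarith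
    rw [e, hG0]
    ring

lemma lin_main {f g : EE → ℝ} (hn : 3 ≤ n) (hf : ContDiff ℝ 3 f) (hg : ContDiff ℝ 2 g) (x : EE) :
    ∃ V1 V2 : ℝ → ℝ,
      (∀ t, HasDerivAt (fun t => linearPart n f g x t) (V1 t) t) ∧
      (∀ t, HasDerivAt V1 (V2 t) t) ∧
      (∀ t, ContDiff ℝ 2 (fun y => linearPart n f g y t)) ∧
      (∀ t, V2 t - laplacian n (fun y => linearPart n f g y t) x
        = - ((((n : ℝ) - 3) / (((n : ℝ) - 2) * sphereArea n)) *
          ∫ ω : sphere (0 : EE) 1, (laplacian n f (x + t • (ω : EE))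
            + ((n : ℝ) - 2) * fderiv ℝ g (x + t • (ω : EE)) ω) ∂(sphereMeasure n))) := by
  have hn2 : (n:ℝ) - 2 ≠ 0 := by
    have : (3:ℝ) ≤ n := by exact_mod_cast hn
    linarith
  have hf2 : ContDiff ℝ 2 f := hf.of_le (by norm_num)
  have hf1 : ContDiff ℝ 1 f := hf.of_le (by norm_num)
  have hg1 : ContDiff ℝ 1 g := hg.of_le (by norm_num)
  have hlf : ContDiff ℝ 1 (laplacian n f) := lap_contDiff (k := 1) (by norm_num; exact hf)
  have hlfc := hlf.continuous
  have hdgc := hg.continuous_fderiv (by norm_num)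
  let Q : ℝ → ℝ := fun t => ∫ ω : sphere (0 : EE) 1, laplacian n f (x + t • (ω : EE))
    ∂(sphereMeasure n)
  let Q1 : ℝ → ℝ := fun t => ∫ ω : sphere (0 : EE) 1, fderiv ℝ (laplacian n f) (x + t • (ω : EE)) ω
    ∂(sphereMeasure n)
  let Mg : ℝ → ℝ := fun t => ∫ ω : sphere (0 : EE) 1, g (x + t • (ω : EE)) ∂(sphereMeasure n)
  let Mg1 : ℝ → ℝ := fun t => ∫ ω : sphere (0 : EE) 1, fderiv ℝ g (x + t • (ω : EE)) ω
    ∂(sphereMeasure n)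
  let Qg : ℝ → ℝ := fun t => ∫ ω : sphere (0 : EE) 1, laplacian n g (x + t • (ω : EE))
    ∂(sphereMeasure n)
  have hQ : ∀ t, HasDerivAt Q (Q1 t) t := sph_deriv hlf x
  have hMg : ∀ t, HasDerivAt Mg (Mg1 t) t := sph_deriv hg1 x
  refine ⟨fun t => (sphereArea n)⁻¹ * (t / ((n:ℝ) - 2) * Q t + Mg t + t * Mg1 t),
    fun t => (sphereArea n)⁻¹ * ((Q t + t * Q1 t) / ((n:ℝ) - 2) + 2 * Mg1 t + t * Qg t
      - ((n:ℝ) - 1) * Mg1 t), ?_, ?_, ?_, ?_⟩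
  · intro t
    simp only [linearPart_eq hf hg]
    have h1 := sph_deriv2 hf2 x t
    have h2 := darboux hf2 x t
    have h3 := sph_deriv hf1 x t
    refine (((((hasDerivAt_id t).div_const ((n:ℝ) - 2)).mul h1).add h3).add
      ((hasDerivAt_id t).mul (hMg t))).const_mul (sphereArea n)⁻¹ |>.congr_deriv ?_
    simp only [id_eq]
    rw [div_mul_eq_mul_div t _ (∫ ω : sphere (0 : EE) 1,
      fderiv ℝ (fun z => fderiv ℝ f z ω) (x + t • (ω : EE)) ω ∂(sphereMeasure n)), h2]
    simp only [Q]
    field_simp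
    ring
  · intro t
    have h1 := sph_deriv2 hg x t
    have h2 := darboux hg x t
    refine (((((hasDerivAt_id t).div_const ((n:ℝ) - 2)).mul (hQ t)).add (hMg t)).add
      ((hasDerivAt_id t).mul h1)).const_mul (sphereArea n)⁻¹ |>.congr_deriv ?_
    simp only [id_eq]
    rw [h2]
    simp only [Mg1, Qg]
    field_simp
    ring
  · intro t
    simp only [linearPart_eq hf hg]
    have := sph_contDiff hf2 t
    have := sph_contDiff hg t
    have := sph_contDiff2 hf t
    fun_prop
  · intro t
    simp only [linearPart_eq hf hg]
    have c1 := sph_contDiff hf2 t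
    have c2 := sph_contDiff hg t
    have c3 := sph_contDiff2 hf t
    rw [lap_const_mul (by fun_prop), lap_add (by fun_prop) (by fun_prop),
      lap_add (by fun_prop) (by fun_prop), lap_const_mul (by fun_prop), lap_const_mul (by fun_prop),
      sph_lap hf2, sph_lap hg, sph_lap2 hf]
    rw [integral_add, integral_const_mul]
    · change (sphereArea n)⁻¹ * ((Q t + t * Q1 t) / ((n:ℝ) - 2) + 2 * Mg1 t + t * Qg t
        - ((n:ℝ) - 1) * Mg1 t) - (sphereArea n)⁻¹ * (t / ((n:ℝ) - 2) * Q1 t + Q t + t * Qg t)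
        = - ((((n : ℝ) - 3) / (((n : ℝ) - 2) * sphereArea n)) * (Q t + ((n:ℝ) - 2) * Mg1 t))
      rw [div_mul_eq_div_div, div_eq_mul_inv _ (sphereArea n)]
      field_simp
      ring
    · exact sph_integrable (Ψ := fun ω => laplacian n f (x + t • ω)) (by fun_prop)
    · exact sph_integrable (Ψ := fun ω => ((n:ℝ) - 2) * fderiv ℝ g (x + t • ω) ω) (by fun_prop)

lemma area_ne_zero (hn : 3 ≤ n) : sphereArea n ≠ 0 := by
  have : NeZero n := ⟨by omega⟩
  unfold sphereArea
  rw [ENNReal.toReal_ne_zero]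
  refine ⟨?_, measure_ne_top _ _⟩
  rw [Measure.measure_univ_ne_zero]
  unfold sphereMeasure
  have : Nontrivial EE := by
    refine Module.nontrivial_of_finrank_pos (R := ℝ) ?_
    simp; omega
  exact Measure.toSphere_ne_zero _

end duh

/-- Theorem 1: a solution of the Agemi–Takamura integral equation solves
`∂ₜ²u − Δu = F − H`. -/
theorem AT_wave_equation (n : ℕ) (hn : 3 ≤ n) (ε : ℝ)
    (f g : EuclideanSpace ℝ (Fin n) → ℝ)
    (hf : ContDiff ℝ 3 f) (hg : ContDiff ℝ 2 g)
    (F : EuclideanSpace ℝ (Fin n) → ℝ → ℝ)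
    (hF : ContDiff ℝ 2 (fun p : EuclideanSpace ℝ (Fin n) × ℝ => F p.1 p.2))
    (u : EuclideanSpace ℝ (Fin n) → ℝ → ℝ)
    (hu : ∀ x t, u x t = ε * linearPart n f g x t + duhamelOp n F x t) :
    ∀ x t, 0 ≤ t →
      deriv (fun s => deriv (fun s' => u x s') s) t
          - laplacian n (fun y => u y t) x
        = F x t - correctionH n ε f g F x t := by
  intro x t ht
  have hn2 : (n:ℝ) - 2 ≠ 0 := by
    have : (3:ℝ) ≤ n := by exact_mod_cast hn
    linarith
  have ha := area_ne_zero hn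
  obtain ⟨V1, V2, hV1, hV2, hVc, hV⟩ := lin_main hn hf hg x
  obtain ⟨N1, N2, hN1, hN2, hNc, hN⟩ := duh_main hF x
  have hVt := hV t
  have hNt := hN t ht
  simp only [hu]
  have e1 : (fun s => deriv (fun s' => ε * linearPart n f g x s' + duhamelOp n F x s') s)
      = fun s => ε * V1 s + (((n : ℝ) - 2) * sphereArea n)⁻¹ * N1 s := by
    funext s
    exact (((hV1 s).const_mul ε).add ((hN1 s).const_mul ((((n : ℝ) - 2) * sphereArea n)⁻¹))).deriv
  rw [e1]
  rw [(((hV2 t).const_mul ε).fun_add ((hN2 t).const_mul ((((n : ℝ) - 2) * sphereArea n)⁻¹))).deriv]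
  unfold duhamelOp
  have c1 := hVc t
  have c2 := hNc t ht
  rw [lap_add (by fun_prop) (by fun_prop), lap_const_mul c1, lap_const_mul c2]
  unfold correctionH
  rw [sub_eq_iff_eq_add] at hVt hNt
  rw [hVt, hNt]
  field_simp
  ring
end

section
/- Let b ∈ C([0,∞)), n ≥ 2, x ∈ ℝⁿ with r = |x| > 0, and ρ > 0. Then ∫_{|ω|=1} b(|x + ρω|) dS_ω = 2^{3−n} ω_{n−1} (rρ)^{2−n} ∫_{|ρ−r|}^{ρ+r} λ b(λ) (λ² − (ρ−r)²)^{(n−3)/2} ((ρ+r)² − λ²)^{(n−3)/2} dλ, where ω_{n−1} is the surface measure of the unit sphere in ℝ^{n−1}. -/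
open MeasureTheory Metric

lemma js_integrable {X : Type*} [NormedAddCommGroup X] [ProperSpace X] [MeasurableSpace X]
    [BorelSpace X] (μ : Measure X) [IsFiniteMeasureOnCompacts μ] (f : X → ℝ) (hf : Measurable f)
    (C : ℝ) (hC : ∀ p, |f p| ≤ C) (h0 : ∀ p, 1 < ‖p‖ → f p = 0) : Integrable f μ := by
  rw [← integrableOn_iff_integrable_of_support_subset (s := closedBall (0 : X) 1)]
  · refine Measure.integrableOn_of_bounded (M := C) ?_ hf.aestronglyMeasurable ?_
    · exact (isCompact_closedBall (0 : X) 1).measure_lt_top.ne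
    · exact Filter.Eventually.of_forall hC
  · intro p hp
    by_contra h
    simp at h
    exact hp (h0 p h)

lemma js_equiv (m : ℕ) (e : EuclideanSpace ℝ (Fin (m+1))) (he : ‖e‖ = 1) :
    ∃ Φ : EuclideanSpace ℝ (Fin (m+1)) ≃ᵐ ℝ × EuclideanSpace ℝ (Fin m),
      MeasurePreserving Φ volume volume ∧ (∀ y, (Φ y).1 = inner ℝ e y) ∧
      ∀ y, ‖y‖ ^ 2 = (Φ y).1 ^ 2 + ‖(Φ y).2‖ ^ 2 := by
  obtain ⟨b, hb⟩ := Orthonormal.exists_orthonormalBasis_extension_of_card_eq (𝕜 := ℝ)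
    (E := EuclideanSpace ℝ (Fin (m+1))) (ι := Fin (m+1)) (by simp) (v := fun _ => e) (s := {0})
    (by
      refine ⟨fun _ => by simpa using he, ?_⟩
      intro i j hij
      exact absurd (Subsingleton.elim i j) hij)
  have hb0 : b 0 = e := hb 0 (by simp)
  let Ψ := (MeasurableEquiv.toLp 2 (Fin (m+1) → ℝ)).symm.trans
    ((MeasurableEquiv.piFinSuccAbove (fun _ : Fin (m+1) => ℝ) 0).trans
      ((MeasurableEquiv.refl ℝ).prodCongr (MeasurableEquiv.toLp 2 (Fin m → ℝ))))
  refine ⟨b.repr.toHomeomorph.toMeasurableEquiv.trans Ψ, ?_, ?_, ?_⟩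
  · refine MeasurePreserving.trans (b.repr.measurePreserving) ?_
    refine (EuclideanSpace.volume_preserving_symm_measurableEquiv_toLp _).trans ?_
    refine (volume_preserving_piFinSuccAbove (fun _ => ℝ) 0).trans ?_
    exact (MeasurePreserving.id _).prod (PiLp.volume_preserving_toLp _)
  · intro y
    rw [← hb0, ← b.repr_apply_apply]
    rfl
  · intro y
    rw [← b.repr.norm_map, EuclideanSpace.real_norm_sq_eq, EuclideanSpace.real_norm_sq_eq,
      Fin.sum_univ_succ]
    rfl

lemma js_sphere {E : Type*} [NormedAddCommGroup E] [InnerProductSpace ℝ E] [FiniteDimensional ℝ E]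
    [MeasurableSpace E] [BorelSpace E] [Nontrivial E] (μ : Measure E) [μ.IsAddHaarMeasure]
    (f : E → ℝ) :
    ∫ ω : sphere (0:E) 1, f ω ∂μ.toSphere
      = Module.finrank ℝ E * ∫ y, (if ‖y‖ < 1 then f (‖y‖⁻¹ • y) else 0) ∂μ := by
  have hd : 0 < Module.finrank ℝ E := Module.finrank_pos
  have h1 : ∫ y, (if ‖y‖ < 1 then f (‖y‖⁻¹ • y) else 0) ∂μ =
      ∫ y : ({(0:E)}ᶜ : Set E), (if ‖y.1‖ < 1 then f (‖y.1‖⁻¹ • y.1) else 0) ∂(μ.comap (↑)) := by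
    rw [integral_subtype_comap (measurableSet_singleton _).compl
      fun y ↦ (if ‖y‖ < 1 then f (‖y‖⁻¹ • y) else 0), restrict_compl_singleton]
  have h2 := μ.measurePreserving_homeomorphUnitSphereProd.integral_comp
        (Homeomorph.measurableEmbedding _)
        (fun p : sphere (0:E) 1 × Set.Ioi (0:ℝ) => f p.1 * (if p.2.1 < 1 then (1:ℝ) else 0))
  have h3 : ∫ s : Set.Ioi (0:ℝ), (if s.1 < 1 then (1:ℝ) else 0)
      ∂(Measure.volumeIoiPow (Module.finrank ℝ E - 1)) = 1 / Module.finrank ℝ E := by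
    have : (fun s : Set.Ioi (0:ℝ) => (if s.1 < 1 then (1:ℝ) else 0)) =
      (Set.Iio (⟨1, Set.mem_Ioi.2 one_pos⟩ : Set.Ioi (0:ℝ))).indicator 1 := by
      ext s
      simp [Set.indicator, ← Subtype.coe_lt_coe]
    rw [this, integral_indicator_one measurableSet_Iio, Measure.real,
      Measure.volumeIoiPow_apply_Iio, ENNReal.toReal_ofReal (by positivity)]
    simp [Nat.cast_sub (show 1 ≤ Module.finrank ℝ E from hd)]
  rw [integral_prod_mul (fun p : sphere (0:E) 1 => f p) 
    (fun s : Set.Ioi (0:ℝ) => (if s.1 < 1 then (1:ℝ) else 0)), h3] at h2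
  rw [h1]
  have h4 : ∀ y : ({(0:E)}ᶜ : Set E), (if ‖y.1‖ < 1 then f (‖y.1‖⁻¹ • y.1) else 0) =
     f (homeomorphUnitSphereProd E y).1 *
      (if (homeomorphUnitSphereProd E y).2.1 < 1 then (1:ℝ) else 0) := by
    intro y
    simp
  simp_rw [h4]
  rw [h2]
  field_simp

lemma js_polar (k : ℕ) (g : ℝ → ℝ) :
    ∫ p : ℝ × ℝ, (if 0 < p.2 then p.2 ^ k *
      (if p.1 ^ 2 + p.2 ^ 2 < 1 then g (p.1 / √(p.1 ^ 2 + p.2 ^ 2)) else 0) else 0)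
    = 1 / (k + 2) * ∫ θ in Set.Ioo 0 Real.pi, Real.sin θ ^ k * g (Real.cos θ) := by
  rw [← integral_comp_polarCoord_symm]
  have : ∀ p ∈ polarCoord.target, p.1 • (fun p : ℝ × ℝ => (if 0 < p.2 then p.2 ^ k *
      (if p.1 ^ 2 + p.2 ^ 2 < 1 then g (p.1 / √(p.1 ^ 2 + p.2 ^ 2)) else 0) else 0))
      (polarCoord.symm p) = (if p.1 < 1 then p.1 ^ (k+1) else 0) *
      (Set.Ioo 0 Real.pi).indicator (fun θ => Real.sin θ ^ k * g (Real.cos θ)) p.2 := by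
    rintro ⟨s, θ⟩ ⟨hs, hθ1, hθ2⟩
    simp only [polarCoord_symm_apply, Set.mem_Ioi] at hs hθ1 hθ2 ⊢
    have e1 : (s * Real.cos θ) ^ 2 + (s * Real.sin θ) ^ 2 = s ^ 2 := by
      linear_combination s ^ 2 * Real.sin_sq_add_cos_sq θ
    rw [e1, Real.sqrt_sq hs.le, mul_div_cancel_left₀ _ hs.ne']
    simp only [sq_lt_one_iff₀ hs.le]
    by_cases h : 0 < θ
    · have : 0 < Real.sin θ := Real.sin_pos_of_pos_of_lt_pi h hθ2
      rw [if_pos (by positivity), Set.indicator_of_mem (Set.mem_Ioo.2 ⟨h, hθ2⟩)]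
      split_ifs <;> simp; ring
    · have : Real.sin θ ≤ 0 := Real.sin_nonpos_of_nonpos_of_neg_pi_le (not_lt.1 h) hθ1.le
      rw [if_neg (by nlinarith), Set.indicator_of_notMem (fun h' => h h'.1)]
      simp
  rw [setIntegral_congr_fun polarCoord.open_target.measurableSet this, polarCoord_target,
    Measure.volume_eq_prod, setIntegral_prod_mul (fun s : ℝ => if s < 1 then s ^ (k+1) else 0)
      ((Set.Ioo 0 Real.pi).indicator (fun θ => Real.sin θ ^ k * g (Real.cos θ)))]
  congr 1
  · have : (fun s : ℝ => if s < 1 then s ^ (k+1) else 0) =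
      (Set.Iio 1).indicator (fun s => s ^ (k+1)) := by ext s; simp [Set.indicator]
    rw [this, setIntegral_indicator measurableSet_Iio, Set.Ioi_inter_Iio, ← integral_Ioc_eq_integral_Ioo,
      ← intervalIntegral.integral_of_le zero_le_one, integral_pow]
    simp; ring
  · rw [setIntegral_indicator measurableSet_Ioo]
    congr 2
    rw [Set.inter_eq_right]
    exact Set.Ioo_subset_Ioo_left (by linarith [Real.pi_pos])

lemma js_main (k : ℕ) (e : EuclideanSpace ℝ (Fin (k+1+1))) (he : ‖e‖ = 1)
    (g : ℝ → ℝ) (hg : Continuous g) :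
    ∫ ω : sphere (0 : EuclideanSpace ℝ (Fin (k+1+1))) 1, g (inner ℝ e (ω : EuclideanSpace ℝ (Fin (k+1+1))))
      ∂(volume : Measure (EuclideanSpace ℝ (Fin (k+1+1)))).toSphere
    = ((volume : Measure (EuclideanSpace ℝ (Fin (k+1)))).toSphere Set.univ).toReal *
      ∫ θ in Set.Ioo 0 Real.pi, Real.sin θ ^ k * g (Real.cos θ) := by
  obtain ⟨Φ, hΦ, h1, h2⟩ := js_equiv (k+1) e he
  obtain ⟨C, hC⟩ := (isCompact_Icc (a := (-1:ℝ)) (b := 1)).exists_bound_of_continuousOn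
    hg.continuousOn
  have hC0 : 0 ≤ C := (norm_nonneg _).trans (hC 0 (by simp))
  set H : ℝ → ℝ → ℝ := fun t s => if t ^ 2 + s ^ 2 < 1 then g (t / √(t ^ 2 + s ^ 2)) else 0 with hH
  have hHC : ∀ t s, |H t s| ≤ C := by
    intro t s
    simp only [hH]
    split_ifs
    · apply hC
      rw [Set.mem_Icc, ← abs_le, abs_div, abs_of_nonneg (Real.sqrt_nonneg _)]
      apply div_le_one_of_le₀ _ (Real.sqrt_nonneg _)
      rw [← Real.sqrt_sq_eq_abs]
      exact Real.sqrt_le_sqrt (by nlinarith)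
    · simpa
  have hHm : Measurable fun p : ℝ × ℝ => H p.1 p.2 := by
    simp only [hH]
    refine Measurable.ite (measurableSet_lt (by fun_prop) (by fun_prop)) ?_ measurable_const
    exact hg.measurable.comp (by fun_prop)
  have hH0 : ∀ t s, 1 < |t| ∨ 1 < |s| → H t s = 0 := by
    intro t s h
    simp only [hH]
    rw [if_neg]
    rcases h with h | h <;> have := (one_lt_sq_iff_one_lt_abs _).2 h <;> nlinarith
  rw [js_sphere volume (fun y => g (inner ℝ e y))]
  have h3 : ∀ y : EuclideanSpace ℝ (Fin (k+1+1)), (if ‖y‖ < 1 then g (inner ℝ e (‖y‖⁻¹ • y)) else 0)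
      = (fun p : ℝ × EuclideanSpace ℝ (Fin (k+1)) => H p.1 ‖p.2‖) (Φ y) := by
    intro y
    simp only [hH]
    rw [← h2, Real.sqrt_sq (norm_nonneg _), h1, inner_smul_right, inv_mul_eq_div]
    simp only [sq_lt_one_iff₀ (norm_nonneg y)]
  simp_rw [h3]
  rw [hΦ.integral_comp Φ.measurableEmbedding
    (fun p : ℝ × EuclideanSpace ℝ (Fin (k+1)) => H p.1 ‖p.2‖)]
  have i1 : Integrable (fun p : ℝ × EuclideanSpace ℝ (Fin (k+1)) => H p.1 ‖p.2‖) volume := by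
    refine js_integrable _ _ ?_ C (fun p => hHC _ _) ?_
    · exact hHm.comp (f := fun p : ℝ × EuclideanSpace ℝ (Fin (k+1)) => (p.1, ‖p.2‖)) (by fun_prop)
    · intro p hp
      apply hH0
      rw [Prod.norm_def, lt_max_iff] at hp
      simpa using hp
  rw [Measure.volume_eq_prod] at i1 ⊢
  rw [integral_prod _ i1]
  simp_rw [integral_fun_norm_addHaar]
  have i2 : Integrable (fun p : ℝ × ℝ => if 0 < p.2 then p.2 ^ k * H p.1 p.2 else 0) volume := by
    refine js_integrable _ _ ?_ C ?_ ?_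
    · refine Measurable.ite (measurableSet_lt (by fun_prop) (by fun_prop)) ?_ measurable_const
      exact Measurable.mul (by fun_prop) hHm
    · intro p
      split_ifs with h
      · by_cases h' : 1 < |p.2|
        · rw [hH0 _ _ (Or.inr h')]; simpa
        · rw [abs_mul, abs_pow]
          calc _ ≤ 1 * C := by
                gcongr
                · exact pow_le_one₀ (abs_nonneg _) (not_lt.1 h')
                · exact hHC _ _
            _ = C := one_mul _
      · simpa
    · intro p hp
      rw [Prod.norm_def, lt_max_iff] at hp
      rw [hH0 _ _ (by simpa using hp)]
      simp
  have h5 := js_polar k g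
  rw [Measure.volume_eq_prod] at i2 h5
  rw [integral_prod _ i2] at h5
  have h6 : ∀ t : ℝ, ∫ s in Set.Ioi (0:ℝ), s ^ k * H t s
      = ∫ s, (if 0 < s then s ^ k * H t s else 0) := by
    intro t
    rw [← integral_indicator measurableSet_Ioi]
    rfl
  simp only [finrank_euclideanSpace, Fintype.card_fin, Nat.add_sub_cancel, smul_eq_mul, nsmul_eq_mul]
  simp_rw [h6]
  rw [integral_const_mul, integral_const_mul, h5]
  have h7 := (volume : Measure (EuclideanSpace ℝ (Fin (k+1)))).toSphere_real_apply_univ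
  rw [Measure.real] at h7
  rw [h7]
  simp only [finrank_euclideanSpace, Fintype.card_fin]
  push_cast
  field_simp
  ring

lemma js_final (k : ℕ) (b : ℝ → ℝ) (r ρ : ℝ) (hr : 0 < r) (hρ : 0 < ρ) :
    ∫ θ in Set.Ioo 0 Real.pi, Real.sin θ ^ k * b √(r ^ 2 + ρ ^ 2 + 2 * r * ρ * Real.cos θ)
    = (2 : ℝ) ^ ((3 : ℝ) - (k + 2 : ℕ)) * (r * ρ) ^ ((2 : ℝ) - (k + 2 : ℕ)) *
        ∫ lam in (|ρ - r|)..(ρ + r),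
          lam * b lam *
            ((lam ^ 2 - (ρ - r) ^ 2) ^ ((((k + 2 : ℕ) : ℝ) - 3) / 2) *
              ((ρ + r) ^ 2 - lam ^ 2) ^ ((((k + 2 : ℕ) : ℝ) - 3) / 2)) := by
  have hrρ : 0 < r * ρ := mul_pos hr hρ
  set f : ℝ → ℝ := fun θ => √(r ^ 2 + ρ ^ 2 + 2 * r * ρ * Real.cos θ) with hf
  have hcos : ∀ θ ∈ Set.Ioo 0 Real.pi, -1 < Real.cos θ ∧ Real.cos θ < 1 := by
    intro θ hθ
    have := Real.sin_pos_of_pos_of_lt_pi hθ.1 hθ.2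
    have h2 := Real.sin_sq_add_cos_sq θ
    constructor <;> nlinarith
  have hpos : ∀ θ ∈ Set.Ioo 0 Real.pi, 0 < r ^ 2 + ρ ^ 2 + 2 * r * ρ * Real.cos θ := by
    intro θ hθ
    have := hcos θ hθ
    nlinarith [sq_nonneg (r - ρ)]
  have hfsq : ∀ θ ∈ Set.Ioo 0 Real.pi, f θ ^ 2 = r ^ 2 + ρ ^ 2 + 2 * r * ρ * Real.cos θ :=
    fun θ hθ => Real.sq_sqrt (hpos θ hθ).le
  have hfpos : ∀ θ ∈ Set.Ioo 0 Real.pi, 0 < f θ := fun θ hθ => Real.sqrt_pos.2 (hpos θ hθ)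
  have himg : f '' Set.Ioo 0 Real.pi = Set.Ioo |ρ - r| (ρ + r) := by
    ext l
    constructor
    · rintro ⟨θ, hθ, rfl⟩
      have h1 := hcos θ hθ
      have h2 := hfsq θ hθ
      have h3 := hfpos θ hθ
      constructor
      · apply lt_of_pow_lt_pow_left₀ 2 h3.le
        rw [sq_abs, h2]; nlinarith
      · apply lt_of_pow_lt_pow_left₀ 2 (by positivity)
        rw [h2]; nlinarith
    · rintro ⟨h1, h2⟩
      have hl : 0 < l := (abs_nonneg _).trans_lt h1
      have h1' : (ρ - r) ^ 2 < l ^ 2 := by rw [← sq_abs]; gcongr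
      have h2' : l ^ 2 < (ρ + r) ^ 2 := by gcongr
      set c := (l ^ 2 - r ^ 2 - ρ ^ 2) / (2 * (r * ρ)) with hc
      have hc' : 2 * (r * ρ) * c = l ^ 2 - r ^ 2 - ρ ^ 2 := by rw [hc]; field_simp
      have c1 : -1 < c := by rw [hc, lt_div_iff₀ (by positivity)]; nlinarith
      have c2 : c < 1 := by rw [hc, div_lt_iff₀ (by positivity)]; nlinarith
      refine ⟨Real.arccos c, ⟨Real.arccos_pos.2 c2, ?_⟩, ?_⟩
      · refine lt_of_le_of_ne (Real.arccos_le_pi c) fun h => ?_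
        have := Real.arccos_eq_pi.1 h
        linarith
      · simp only [hf]
        rw [Real.cos_arccos c1.le c2.le,
          show r ^ 2 + ρ ^ 2 + 2 * r * ρ * c = l ^ 2 by linear_combination hc', Real.sqrt_sq hl.le]
  have hinj : Set.InjOn f (Set.Ioo 0 Real.pi) := by
    intro θ hθ φ hφ h
    have h1 := hfsq θ hθ
    have h2 := hfsq φ hφ
    rw [h, h2] at h1
    refine Real.injOn_cos ⟨hθ.1.le, hθ.2.le⟩ ⟨hφ.1.le, hφ.2.le⟩ ?_
    have : 2 * (r * ρ) * Real.cos θ = 2 * (r * ρ) * Real.cos φ := by linarith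
    exact mul_left_cancel₀ (by positivity) this
  have hder : ∀ θ ∈ Set.Ioo 0 Real.pi,
      HasDerivWithinAt f (-(r * ρ * Real.sin θ) / f θ) (Set.Ioo 0 Real.pi) θ := by
    intro θ hθ
    have := (((Real.hasDerivAt_cos θ).const_mul (2 * r * ρ)).const_add (r ^ 2 + ρ ^ 2)).sqrt
      (hpos θ hθ).ne'
    refine HasDerivAt.hasDerivWithinAt ?_
    convert! this using 1
    have := hfpos θ hθ
    simp only [hf] at this ⊢
    field_simp
  have hle : |ρ - r| ≤ ρ + r := abs_le.2 ⟨by linarith, by linarith⟩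
  rw [intervalIntegral.integral_of_le hle, integral_Ioc_eq_integral_Ioo, ← himg,
    integral_image_eq_integral_abs_deriv_smul measurableSet_Ioo hder hinj, ← integral_const_mul]
  refine setIntegral_congr_fun measurableSet_Ioo fun θ hθ => ?_
  have h1 := hcos θ hθ
  have h2 := hfsq θ hθ
  have h3 := hfpos θ hθ
  have hs := Real.sin_pos_of_pos_of_lt_pi hθ.1 hθ.2
  have hA : 0 ≤ f θ ^ 2 - (ρ - r) ^ 2 := by rw [h2]; nlinarith
  have hB : 0 ≤ (ρ + r) ^ 2 - f θ ^ 2 := by rw [h2]; nlinarith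
  have hAB : (f θ ^ 2 - (ρ - r) ^ 2) * ((ρ + r) ^ 2 - f θ ^ 2) = (2 * (r * ρ) * Real.sin θ) ^ 2 := by
    rw [h2]
    linear_combination -4 * r ^ 2 * ρ ^ 2 * Real.sin_sq_add_cos_sq θ
  have hk : (f θ ^ 2 - (ρ - r) ^ 2) ^ ((((k + 2 : ℕ) : ℝ) - 3) / 2) *
      ((ρ + r) ^ 2 - f θ ^ 2) ^ ((((k + 2 : ℕ) : ℝ) - 3) / 2)
      = (2 * (r * ρ) * Real.sin θ) ^ k / (2 * (r * ρ) * Real.sin θ) := by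
    rw [← Real.mul_rpow hA hB, hAB, ← Real.rpow_natCast _ 2, ← Real.rpow_mul (by positivity),
      ← Real.rpow_natCast _ k, ← Real.rpow_sub_one (by positivity)]
    congr 1
    push_cast
    ring
  have e1 : (2 : ℝ) ^ ((3 : ℝ) - (k + 2 : ℕ)) = 2 / 2 ^ k := by
    rw [show (3 : ℝ) - (k + 2 : ℕ) = 1 - (k : ℕ) by push_cast; ring,
      Real.rpow_sub two_pos, Real.rpow_one, Real.rpow_natCast]
  have e2 : (r * ρ) ^ ((2 : ℝ) - (k + 2 : ℕ)) = 1 / (r * ρ) ^ k := by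
    rw [show (2 : ℝ) - (k + 2 : ℕ) = 0 - (k : ℕ) by push_cast; ring,
      Real.rpow_sub hrρ, Real.rpow_zero, Real.rpow_natCast]
  have e3 : |-(r * ρ * Real.sin θ) / f θ| = r * ρ * Real.sin θ / f θ := by
    rw [neg_div, abs_neg, abs_of_pos (by positivity)]
  rw [e1, e2]
  simp only [smul_eq_mul]
  rw [e3, hk, mul_pow, mul_pow]
  change Real.sin θ ^ k * b (f θ) = _
  generalize f θ = l at *
  field_simp
  rw [mul_pow, mul_pow]
  ring

/-- John's fundamental identity for spherical means. -/
theorem john_spherical_means_identity (n : ℕ) (hn : 2 ≤ n)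
    (b : ℝ → ℝ) (hb : ContinuousOn b (Set.Ici 0))
    (x : EuclideanSpace ℝ (Fin n)) (hx : 0 < ‖x‖) (ρ : ℝ) (hρ : 0 < ρ) :
    (∫ ω : sphere (0 : EuclideanSpace ℝ (Fin n)) 1,
        b ‖x + ρ • (ω : EuclideanSpace ℝ (Fin n))‖
        ∂(Measure.toSphere (volume : Measure (EuclideanSpace ℝ (Fin n)))))
      = (2 : ℝ) ^ ((3 : ℝ) - n) *
        ((Measure.toSphere (volume : Measure (EuclideanSpace ℝ (Fin (n - 1)))))
            Set.univ).toReal *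
        (‖x‖ * ρ) ^ ((2 : ℝ) - n) *
        ∫ lam in (|ρ - ‖x‖|)..(ρ + ‖x‖),
          lam * b lam *
            ((lam ^ 2 - (ρ - ‖x‖) ^ 2) ^ (((n : ℝ) - 3) / 2) *
              ((ρ + ‖x‖) ^ 2 - lam ^ 2) ^ (((n : ℝ) - 3) / 2)) := by
  obtain ⟨k, rfl⟩ : ∃ k, n = k + 1 + 1 := ⟨n - 2, by omega⟩
  have he : ‖(‖x‖⁻¹ • x)‖ = 1 := by
    rw [norm_smul, norm_inv, norm_norm, inv_mul_cancel₀ hx.ne']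
  have hg : Continuous fun t : ℝ => b √(‖x‖ ^ 2 + ρ ^ 2 + 2 * ‖x‖ * ρ * t) :=
    hb.comp_continuous (by fun_prop) (fun t => Real.sqrt_nonneg _)
  have h1 := js_main k _ he _ hg
  have h2 := js_final k b ‖x‖ ρ hx hρ
  rw [h2] at h1
  have h3 : ∀ ω : sphere (0 : EuclideanSpace ℝ (Fin (k + 1 + 1))) 1,
      ‖x + ρ • (ω : EuclideanSpace ℝ (Fin (k + 1 + 1)))‖ = √(‖x‖ ^ 2 + ρ ^ 2 + 2 * ‖x‖ * ρ *
        inner ℝ (‖x‖⁻¹ • x) (ω : EuclideanSpace ℝ (Fin (k + 1 + 1)))) := by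
    intro ω
    have hω : ‖(ω : EuclideanSpace ℝ (Fin (k + 1 + 1)))‖ = 1 := norm_eq_of_mem_sphere ω
    rw [← Real.sqrt_sq (norm_nonneg (x + _)), norm_add_sq_real, norm_smul, hω, inner_smul_right,
      real_inner_smul_left, Real.norm_eq_abs, mul_one, sq_abs]
    congr 1
    field_simp
    ring
  simp_rw [h3]
  rw [h1]
  have h4 : ∀ W A B I : ℝ, W * (A * B * I) = A * W * B * I := by intros; ring
  exact h4 _ _ _ _
end
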